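/- Let p be a prime and G a finite non-abelian p-group of order p^n with n ≥ 5 whose abelianization G/G' is not elementary abelian (i.e. does not have exponent p). Then the Schur multiplier of G does not have order p^{(n-1)(n-2)/2 - 1} (i.e. G does not satisfy s(G) = 2). -/

import Mathlib

/-- The kernel of the canonical free presentation `FreeGroup G → G`. -/
def presentationKernel (G : Type u) [Group G] : Subgroup (FreeGroup G) :=
  (FreeGroup.lift (id : G → G)).ker

/-- The Schur multiplier `M(G) = H₂(G, ℤ)` (second integral group homology) of a
group `G`, realised via Hopf's integral formula `H₂(G, ℤ) ≅ (R ⊓ [F, F]) / [F, R]`,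
where `F = FreeGroup G` is the canonical free group surjecting onto `G` with
kernel `R`. -/
def SchurMultiplier (G : Type u) [Group G] : Type u :=
  ↥(presentationKernel G ⊓ commutator (FreeGroup G)) ⧸
    (⁅(⊤ : Subgroup (FreeGroup G)), presentationKernel G⁆.subgroupOf
      (presentationKernel G ⊓ commutator (FreeGroup G)))

/-- A finite `p`-group `H` is extraspecial if its center, derived subgroup and
Frattini subgroup coincide and have order `p`. -/
def IsExtraspecial (p : ℕ) (H : Type*) [Group H] : Prop :=
  Subgroup.center H = commutator H ∧ Subgroup.center H = frattini H ∧
    Nat.card (Subgroup.center H) = p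

/-!
For `G = F / R` with `F` free, `E = F / [F, R]` is a central extension of `G` with
`|E'| = |M(G)| |G'|`, so it suffices to bound `|E'|` for central extensions `φ : E → G`.

If `u : E` maps to a central element `z` of order `p`, then `E / [E, u]` is a central extension of
`G / ⟨z⟩`, and `|[E, u]|` is the index of the centralizer of `u`. This centralizer contains
`φ⁻¹⟨z⟩`, whose index is `|G| / p`, and all `p`-th powers, because `[u, y] ^ p = [u ^ p, y] = 1`.
If some `p`-th power lies outside `G'⟨z⟩`, the index is therefore at most `|G| / p ^ 2`. When some
`p`-th power lies outside `G'`, such a `z` exists unless `G` is cyclic, in which case `E` is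
abelian, and induction gives `|E'| ∣ p ^ ((m - 1).choose 2)` for `|G| = p ^ m`.

This rules out `s(G) = 2` when `|G'| ≥ p ^ 2`. When `|G'| = p`, take `u = [α, β]` to be a lift of a
generator of `G'` in the first step: the preimage of the common centralizer of `φ α` and `φ β`, of
index at most `p ^ 2`, centralizes `u`.
-/

open Subgroup
open scoped commutatorElement

universe u

section CommutatorElement

variable {G : Type*} [Group G] {a b c : G}

theorem commutatorElement_mul_left_of_mem_center (hc : c ∈ center G) : ⁅c * a, b⁆ = ⁅a, b⁆ := by
  have hcomm (g : G) : Commute c g := (mem_center_iff.1 hc g).symm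
  rw [commutatorElement_mul_left_eq_conj_mul, (hcomm b).commutator_eq, mul_one, (hcomm _).eq,
    mul_inv_cancel_right]

theorem commutatorElement_mul_right_of_mem_center (hc : c ∈ center G) : ⁅a, c * b⁆ = ⁅a, b⁆ := by
  rw [← commutatorElement_inv, commutatorElement_mul_left_of_mem_center hc, commutatorElement_inv]

theorem commute_commutatorElement (ha : ⁅c, a⁆ ∈ center G) (hb : ⁅c, b⁆ ∈ center G) :
    Commute c ⁅a, b⁆ := by
  have hconj : c * ⁅a, b⁆ * c⁻¹ = ⁅a, b⁆ := by
    have conj_eq (g : G) : c * g * c⁻¹ = ⁅c, g⁆ * g := conj_eq_commutatorElement_mul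
    rw [conjugate_commutatorElement, conj_eq a, conj_eq b,
      commutatorElement_mul_left_of_mem_center ha, commutatorElement_mul_right_of_mem_center hb]
  exact mul_inv_eq_iff_eq_mul.1 hconj

theorem commutatorElement_mul_right_of_commutator_mem_center (hc : ⁅a, c⁆ ∈ center G) :
    ⁅a, b * c⁆ = ⁅a, b⁆ * ⁅a, c⁆ := by
  rw [commutatorElement_mul_right_eq_mul_conj, mul_assoc _ b, mem_center_iff.1 hc b, ← mul_assoc,
    mul_inv_cancel_right]

theorem commutatorElement_pow_right (h : ⁅a, b⁆ ∈ center G) (n : ℕ) :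
    ⁅a, b ^ n⁆ = ⁅a, b⁆ ^ n := by
  induction n with
  | zero => simp
  | succ n ih =>
    rw [pow_succ, commutatorElement_mul_right_of_commutator_mem_center h, ih, pow_succ]

theorem commutatorElement_pow_left (h : ⁅a, b⁆ ∈ center G) (n : ℕ) :
    ⁅a ^ n, b⁆ = ⁅a, b⁆ ^ n := by
  have h' : ⁅b, a⁆ ∈ center G := by rwa [← inv_mem_iff, commutatorElement_inv]
  rw [← commutatorElement_inv, commutatorElement_pow_right h', ← inv_pow, commutatorElement_inv]

/-- The endomorphism `g ↦ ⁅u, g⁆`, defined when `u` is central modulo the center. Its range is the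
subgroup `[G, u]` by which a central extension gets divided in the induction. -/
def commutatorHom (u : G) (hu : ∀ g, ⁅u, g⁆ ∈ center G) : G →* G :=
  MonoidHom.mk' (fun g ↦ ⁅u, g⁆) fun _ g ↦
    commutatorElement_mul_right_of_commutator_mem_center (hu g)

variable {u : G} {hu : ∀ g, ⁅u, g⁆ ∈ center G}

theorem ker_commutatorHom : (commutatorHom u hu).ker = centralizer {u} := by
  ext g
  rw [MonoidHom.mem_ker, mem_centralizer_singleton_iff, eq_comm (a := g * u)]
  exact commutatorElement_eq_one_iff_mul_comm

theorem range_commutatorHom_le_center : (commutatorHom u hu).range ≤ center G := by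
  rintro _ ⟨g, rfl⟩
  exact hu g

theorem range_commutatorHom_le_commutator : (commutatorHom u hu).range ≤ commutator G := by
  rintro _ ⟨g, rfl⟩
  exact commutator_mem_commutator (mem_top u) (mem_top g)

theorem index_centralizer_dvd_card_commutator (hG : commutator G ≤ center G) (a : G) :
    (centralizer {a}).index ∣ Nat.card (commutator G) := by
  rw [← ker_commutatorHom (hu := fun g ↦ hG (commutator_mem_commutator (mem_top a) (mem_top g))),
    index_ker]
  exact card_dvd_of_le range_commutatorHom_le_commutator

theorem index_centralizer_inf_dvd_card_commutator_sq (hG : commutator G ≤ center G) (a b : G) :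
    (centralizer {a} ⊓ centralizer {b}).index ∣ Nat.card (commutator G) ^ 2 := by
  have hnormal : (centralizer {a}).Normal := by
    rw [← ker_commutatorHom (hu := fun g ↦ hG (commutator_mem_commutator (mem_top a) (mem_top g)))]
    infer_instance
  rw [← relIndex_mul_index (inf_le_right : centralizer {a} ⊓ centralizer {b} ≤ _),
    inf_relIndex_right, sq]
  exact mul_dvd_mul
    ((relIndex_dvd_index_of_normal _ _).trans (index_centralizer_dvd_card_commutator hG a))
    (index_centralizer_dvd_card_commutator hG b)

end CommutatorElement

section Subgroup

variable {G : Type*} [Group G]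

theorem normal_of_le_center {H : Subgroup G} (hH : H ≤ center G) : H.Normal where
  conj_mem h hh g := by rwa [mem_center_iff.1 (hH hh) g, mul_inv_cancel_right]

theorem comap_zpowers {G' : Type*} [Group G'] (f : G →* G') (g : G) :
    (zpowers (f g)).comap f = zpowers g ⊔ f.ker := by
  rw [← MonoidHom.map_zpowers, comap_map_eq]

theorem commutatorElement_mem_ker_of_map_mem_center {G' : Type*} [Group G'] {f : G →* G'} {g : G}
    (hg : f g ∈ center G') (x : G) : ⁅g, x⁆ ∈ f.ker := by
  rw [MonoidHom.mem_ker, map_commutatorElement, commutatorElement_eq_one_iff_mul_comm]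
  exact (mem_center_iff.1 hg _).symm

theorem map_commutator_of_surjective {G' : Type*} [Group G'] {f : G →* G'}
    (hf : Function.Surjective f) : (commutator G).map f = commutator G' := by
  rw [map_commutator_eq, MonoidHom.range_eq_top.2 hf, _root_.commutator_def]

theorem relIndex_ker_commutator {G' : Type*} [Group G'] {f : G →* G'}
    (hf : Function.Surjective f) :
    f.ker.relIndex (commutator G) = Nat.card (commutator G') := by
  rw [relIndex_ker, map_commutator_of_surjective hf]

theorem relIndex_commutator (N : Subgroup G) [N.Normal] :
    N.relIndex (commutator G) = Nat.card (commutator (G ⧸ N)) := by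
  rw [← relIndex_ker_commutator (QuotientGroup.mk'_surjective N), QuotientGroup.ker_mk']

theorem card_commutator_eq_card_mul {N : Subgroup G} [N.Normal] (hN : N ≤ commutator G) :
    Nat.card (commutator G) = Nat.card N * Nat.card (commutator (G ⧸ N)) := by
  rw [← relIndex_commutator, ← relIndex_bot_left, ← relIndex_bot_left,
    relIndex_mul_relIndex _ _ _ bot_le hN]

theorem mk_mem_commutator_iff (N : Subgroup G) [N.Normal] {g : G} :
    (g : G ⧸ N) ∈ commutator (G ⧸ N) ↔ g ∈ commutator G ⊔ N := by
  rw [← map_commutator_of_surjective (QuotientGroup.mk'_surjective N), ← QuotientGroup.mk'_apply,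
    ← mem_comap, comap_map_eq, QuotientGroup.ker_mk']

theorem mk_mem_center_iff (N : Subgroup G) [N.Normal] {g : G} :
    (g : G ⧸ N) ∈ center (G ⧸ N) ↔ ∀ x, ⁅g, x⁆ ∈ N := by
  rw [mem_center_iff, (QuotientGroup.mk'_surjective N).forall]
  refine forall_congr' fun x ↦ ?_
  rw [eq_comm, ← commutatorElement_eq_one_iff_mul_comm, ← QuotientGroup.eq_one_iff]
  rfl

theorem exists_commutatorElement_ne_one (hG : commutator G ≠ ⊥) : ∃ a b : G, ⁅a, b⁆ ≠ 1 := by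
  contrapose! hG
  rw [eq_bot_iff, _root_.commutator_def, commutator_le]
  exact fun a _ b _ ↦ hG a b

variable {p : ℕ} [hp : Fact p.Prime]

theorem zpowers_eq_of_card_eq_prime {H : Subgroup G} (hH : Nat.card H = p) {a : G} (ha : a ∈ H)
    (ha1 : a ≠ 1) : zpowers a = H := by
  have htop : zpowers (⟨a, ha⟩ : H) = ⊤ := zpowers_eq_top_of_prime_card hH (by simpa using ha1)
  simpa [MonoidHom.map_zpowers, ← MonoidHom.range_eq_map] using congrArg (map H.subtype) htop

theorem card_quotient_of_card_eq_prime {m : ℕ} (hG : Nat.card G = p ^ m) {N : Subgroup G}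
    (hN : Nat.card N = p) : Nat.card (G ⧸ N) = p ^ (m - 1) := by
  have hmul : p * Nat.card (G ⧸ N) = p ^ m := by rw [← hG, ← hN, ← card_mul_index N, index_eq_card]
  obtain _ | m := m
  · exact absurd (Nat.eq_one_of_mul_eq_one_right hmul) hp.out.ne_one
  · rw [pow_succ'] at hmul
    exact Nat.eq_of_mul_eq_mul_left hp.out.pos hmul

theorem index_dvd_of_lt {H K : Subgroup G} (hHK : H < K) {m : ℕ} (hH : H.index = p ^ m) :
    K.index ∣ p ^ (m - 1) := by
  have : H.FiniteIndex := ⟨hH ▸ pow_ne_zero m hp.out.ne_zero⟩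
  obtain ⟨j, -, hj⟩ := (Nat.dvd_prime_pow hp.out).1 (hH ▸ index_dvd_of_le hHK.le)
  have hlt : j < m := by
    simpa only [hH, hj, Nat.pow_lt_pow_iff_right hp.out.one_lt] using index_strictAnti hHK
  exact hj ▸ pow_dvd_pow p (Nat.le_sub_one_of_lt hlt)

end Subgroup

section PGroup

variable {p : ℕ} [hp : Fact p.Prime] {G : Type*} [Group G]

theorem inf_center_ne_bot_of_isPGroup (hG : IsPGroup p G) {N : Subgroup G} [N.Normal] [Finite N]
    (hN : N ≠ ⊥) : N ⊓ center G ≠ ⊥ := by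
  have hdvd : p ∣ Nat.card N := (hG.to_subgroup N).card_eq_or_dvd.resolve_left (mt card_eq_one.1 hN)
  obtain ⟨b, hfixed, hb1⟩ :=
    (hG.of_equiv ConjAct.toConjAct).exists_fixed_point_of_prime_dvd_card_of_fixed_point N hdvd
      (a := 1) fun g ↦ smul_one g
  have hcentral : (b : G) ∈ center G := mem_center_iff.2 fun g ↦ by
    have hconj := congrArg Subtype.val (hfixed (ConjAct.toConjAct g))
    rw [ConjAct.Subgroup.val_conj_smul, ConjAct.toConjAct_smul] at hconj
    exact mul_inv_eq_iff_eq_mul.1 hconj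
  exact fun hbot ↦ hb1 (Subtype.ext (mem_bot.1 (hbot ▸ ⟨b.2, hcentral⟩)).symm)

theorem exists_mem_center_orderOf_eq_prime (hG : IsPGroup p G) {N : Subgroup G} [N.Normal]
    [Finite N] (hN : N ≠ ⊥) : ∃ z ∈ N, z ∈ center G ∧ orderOf z = p := by
  have : Finite ↥(N ⊓ center G) := Finite.Set.subset (N : Set G) inf_le_left
  have hdvd : p ∣ Nat.card ↥(N ⊓ center G) := (hG.to_subgroup _).card_eq_or_dvd.resolve_left
    (mt card_eq_one.1 (inf_center_ne_bot_of_isPGroup hG hN))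
  obtain ⟨z, hz⟩ := exists_prime_orderOf_dvd_card' p hdvd
  exact ⟨z, z.2.1, z.2.2, by rw [← hz, orderOf_coe]⟩

theorem le_center_of_card_eq_prime (hG : IsPGroup p G) {N : Subgroup G} [N.Normal]
    (hN : Nat.card N = p) : N ≤ center G := by
  have : Finite N := Nat.finite_of_card_ne_zero (hN ▸ hp.out.ne_zero)
  have hne : N ≠ ⊥ := by
    rintro rfl
    exact hp.out.ne_one (hN ▸ card_bot)
  obtain ⟨z, hzN, hz, hzp⟩ := exists_mem_center_orderOf_eq_prime hG hne
  have hz1 : z ≠ 1 := fun h ↦ hp.out.ne_one (by rw [← hzp, h, orderOf_one])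
  rw [← zpowers_eq_of_card_eq_prime hN hzN hz1]
  exact zpowers_le.2 hz

-- `x ^ p` generates every subgroup of order `p`, so for each `y` some `y * x ^ (-j)` has `p`-th
-- power `1` and therefore lies in `zpowers x`.
theorem isCyclic_of_forall_pow_mem_zpowers [IsMulCommutative G] {x z : G} (hx : x ^ p ≠ 1)
    (hz : orderOf z = p) (h : ∀ w : G, orderOf w = p → ∀ y : G, y ^ p ∈ zpowers w) :
    IsCyclic G := by
  have zpowers_eq (w : G) (hw : orderOf w = p) : zpowers (x ^ p) = zpowers w :=
    zpowers_eq_of_card_eq_prime (by rw [Nat.card_zpowers, hw]) (h w hw x) hx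
  refine ⟨x, fun y ↦ ?_⟩
  obtain ⟨j, hj⟩ : y ^ p ∈ zpowers (x ^ p) := zpowers_eq z hz ▸ h z hz y
  have hpow : (y * x ^ (-j)) ^ p = 1 := by
    have hcomm : Commute y (x ^ (-j)) := IsMulCommutative.is_comm.comm _ _
    have hj' : (x ^ p) ^ j = y ^ p := hj
    rw [hcomm.mul_pow, ← hj', zpow_neg, inv_pow, ← zpow_natCast, ← zpow_natCast, zpow_comm,
      mul_inv_cancel]
  have hmem : y * x ^ (-j) ∈ zpowers x := by
    by_cases h1 : y * x ^ (-j) = 1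
    · exact h1 ▸ one_mem _
    · have hle : zpowers (y * x ^ (-j)) ≤ zpowers x :=
        zpowers_eq _ (orderOf_eq_prime hpow h1) ▸ zpowers_le.2 (npow_mem_zpowers x p)
      exact hle (mem_zpowers _)
  exact mem_zpowers_iff.1 (by simpa using mul_mem hmem (zpow_mem_zpowers x j))

theorem isCyclic_or_exists_pow_notMem_sup_zpowers [Finite G] (hG : IsPGroup p G) {x : G}
    (hx : x ^ p ∉ commutator G) :
    IsCyclic G ∨ ∃ z ∈ center G, orderOf z = p ∧ ∃ y, y ^ p ∉ commutator G ⊔ zpowers z := by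
  by_cases hab : commutator G = ⊥
  · have hcomm : IsMulCommutative G := (commutator_eq_bot_iff G).1 hab
    have hcenter : center G = ⊤ := (commutator_eq_bot_iff_center_eq_top G).1 hab
    rw [hab, mem_bot] at hx
    have hne : (⊤ : Subgroup G) ≠ ⊥ := fun h ↦ hx (mem_bot.1 (h ▸ mem_top _))
    obtain ⟨z, -, -, hz⟩ := exists_mem_center_orderOf_eq_prime hG hne
    by_contra! hcon
    simp only [hab, hcenter, bot_sup_eq, mem_top, true_imp_iff] at hcon
    exact hcon.1 (isCyclic_of_forall_pow_mem_zpowers hx hz hcon.2)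
  · obtain ⟨z, hzG, hz, hzp⟩ := exists_mem_center_orderOf_eq_prime hG hab
    exact .inr ⟨z, hz, hzp, x, by rwa [sup_eq_left.2 (zpowers_le.2 hzG)]⟩

theorem exists_pow_notMem_commutator [Finite G] [Nontrivial G] (hG : IsPGroup p G)
    (hab : Monoid.exponent (Abelianization G) ≠ p) : ∃ g : G, g ^ p ∉ commutator G := by
  contrapose! hab
  have hdvd : Monoid.exponent (Abelianization G) ∣ p := by
    refine Monoid.exponent_dvd_of_forall_pow_eq_one fun q ↦ ?_
    obtain ⟨g, rfl⟩ := QuotientGroup.mk'_surjective _ q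
    exact (QuotientGroup.eq_one_iff _).2 (hab g)
  refine ((Nat.dvd_prime hp.out).1 hdvd).resolve_left fun h1 ↦ ?_
  have := hG.isNilpotent
  have : Subsingleton (Abelianization G) := Monoid.exp_eq_one_iff.1 h1
  exact (Group.IsSolvable.commutator_lt_top_of_nontrivial G).ne
    (eq_top_iff.2 fun g _ ↦ (QuotientGroup.eq_one_iff g).1 (this.elim _ _))

end PGroup

theorem choose_two_eq_pred_add (n : ℕ) : n.choose 2 = (n - 1) + (n - 1).choose 2 := by
  cases n <;> simp [Nat.choose_succ_succ' _ 1]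

/-- A central extension of `G`, encoded as a surjective homomorphism onto `G` whose kernel is
central. -/
structure IsCentralExtension {E G : Type*} [Group E] [Group G] (φ : E →* G) : Prop where
  surjective : Function.Surjective φ
  ker_le_center : φ.ker ≤ center E

namespace IsCentralExtension

variable {E : Type u} {G : Type*} [Group E] [Group G] {φ : E →* G} {u : E}

theorem commutatorElement_mem_center (h : IsCentralExtension φ) (hu : φ u ∈ center G) (x : E) :
    ⁅u, x⁆ ∈ center E :=
  h.ker_le_center (commutatorElement_mem_ker_of_map_mem_center hu x)

theorem comap_zpowers_le_centralizer (h : IsCentralExtension φ) :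
    (zpowers (φ u)).comap φ ≤ centralizer {u} := by
  rw [comap_zpowers, sup_le_iff, zpowers_le]
  exact ⟨mem_centralizer_singleton_iff.2 rfl, h.ker_le_center.trans (center_le_centralizer _)⟩

theorem pow_mem_centralizer (h : IsCentralExtension φ) (hu : φ u ∈ center G) {n : ℕ}
    (hn : φ u ^ n = 1) (x : E) : x ^ n ∈ centralizer {u} := by
  have hun : u ^ n ∈ center E := h.ker_le_center (by rw [MonoidHom.mem_ker, map_pow, hn])
  have hcomm : ⁅u, x⁆ ∈ center E := h.commutatorElement_mem_center hu x
  have : ⁅u, x ^ n⁆ = 1 := by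
    rw [commutatorElement_pow_right hcomm, ← commutatorElement_pow_left hcomm,
      commutatorElement_eq_one_iff_mul_comm]
    exact (mem_center_iff.1 hun x).symm
  exact mem_centralizer_singleton_iff.2 (commutatorElement_eq_one_iff_mul_comm.1 this).symm

theorem exists_isCentralExtension_quotient (h : IsCentralExtension φ) {N : Subgroup G} [N.Normal]
    (hN : N ≤ center G) (hu : zpowers (φ u) = N) :
    ∃ (E' : Type u) (_ : Group E') (ψ : E' →* G ⧸ N), IsCentralExtension ψ ∧
      Nat.card (commutator E) = (centralizer {u}).index * Nat.card (commutator E') := by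
  have hφu : φ u ∈ center G := hN (hu ▸ mem_zpowers _)
  have hcomm : ∀ x, ⁅u, x⁆ ∈ center E := h.commutatorElement_mem_center hφu
  let K : Subgroup E := (commutatorHom u hcomm).range
  have : K.Normal := normal_of_le_center range_commutatorHom_le_center
  have hKker : K ≤ φ.ker := by
    rintro _ ⟨x, rfl⟩
    exact commutatorElement_mem_ker_of_map_mem_center hφu x
  have hker : ((QuotientGroup.mk' N).comp φ).ker = zpowers u ⊔ φ.ker := by
    rw [← MonoidHom.comap_ker, QuotientGroup.ker_mk', ← hu, comap_zpowers]
  refine ⟨E ⧸ K, inferInstance, QuotientGroup.lift K ((QuotientGroup.mk' N).comp φ)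
    (hker ▸ hKker.trans le_sup_right), ⟨?_, ?_⟩, ?_⟩
  · exact QuotientGroup.lift_surjective_of_surjective K ((QuotientGroup.mk' N).comp φ)
      ((QuotientGroup.mk'_surjective N).comp h.surjective) _
  · rw [QuotientGroup.ker_lift, hker, map_le_iff_le_comap, sup_le_iff, zpowers_le]
    refine ⟨(mk_mem_center_iff K).2 fun x ↦ ⟨x, rfl⟩,
      fun g hg ↦ (mk_mem_center_iff K).2 fun x ↦ ?_⟩
    rw [commutatorElement_eq_one_iff_mul_comm.2 (mem_center_iff.1 (h.ker_le_center hg) x).symm]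
    exact one_mem K
  · have hK' : K ≤ commutator E := range_commutatorHom_le_commutator
    rw [card_commutator_eq_card_mul hK', ← ker_commutatorHom (hu := hcomm), index_ker]

theorem card_commutator_dvd {p : ℕ} [hp : Fact p.Prime] (h : IsCentralExtension φ) {m : ℕ}
    (hG : Nat.card G = p ^ m) {x : G} (hx : x ^ p ∉ commutator G) :
    Nat.card (commutator E) ∣ p ^ (m - 1).choose 2 := by
  induction m using Nat.strong_induction_on generalizing E G with
  | _ m ih =>
  have hm : m ≠ 0 := by
    rintro rfl
    have := (Nat.card_eq_one_iff_unique.1 hG).1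
    exact hx (Subsingleton.elim 1 (x ^ p) ▸ one_mem _)
  have : Finite G := Nat.finite_of_card_ne_zero (hG ▸ pow_ne_zero m hp.out.ne_zero)
  obtain hcyc | ⟨z, hz, hzp, y, hy⟩ :=
    isCyclic_or_exists_pow_notMem_sup_zpowers (IsPGroup.of_card hG) hx
  · have := φ.isMulCommutative_of_isCyclic_of_ker_le_center h.ker_le_center
    rw [(commutator_eq_bot_iff E).2 this, card_bot]
    exact one_dvd _
  obtain ⟨u, rfl⟩ := h.surjective z
  obtain ⟨w, rfl⟩ := h.surjective y
  have hN : zpowers (φ u) ≤ center G := zpowers_le.2 hz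
  have : (zpowers (φ u)).Normal := normal_of_le_center hN
  have hcard : Nat.card (G ⧸ zpowers (φ u)) = p ^ (m - 1) :=
    card_quotient_of_card_eq_prime hG (by rw [Nat.card_zpowers, hzp])
  have hlt : (zpowers (φ u)).comap φ < centralizer {u} := by
    refine h.comap_zpowers_le_centralizer.lt_of_not_ge fun hle ↦ hy ?_
    rw [← map_pow]
    exact mem_sup_right (hle (h.pow_mem_centralizer hz (hzp ▸ pow_orderOf_eq_one _) w))
  have hindex : (centralizer {u}).index ∣ p ^ (m - 1 - 1) := index_dvd_of_lt hlt <| by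
    rw [index_comap_of_surjective _ h.surjective, index_eq_card, hcard]
  obtain ⟨E', _, ψ, hψ, hE'⟩ := h.exists_isCentralExtension_quotient hN rfl
  have hw : (φ w : G ⧸ zpowers (φ u)) ^ p ∉ commutator (G ⧸ zpowers (φ u)) :=
    (mk_mem_commutator_iff _).not.2 hy
  rw [hE', choose_two_eq_pred_add, pow_add]
  exact mul_dvd_mul hindex (ih (m - 1) (Nat.pred_lt hm) hψ hcard hw)

theorem card_commutator_dvd_of_card_commutator_eq_prime {p : ℕ} [hp : Fact p.Prime]
    (h : IsCentralExtension φ) {m : ℕ} (hG : Nat.card G = p ^ m) {x : G}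
    (hx : x ^ p ∉ commutator G) (hG' : Nat.card (commutator G) = p) :
    Nat.card (commutator E) ∣ p ^ 2 * p ^ (m - 2).choose 2 := by
  have hcenter : commutator G ≤ center G := le_center_of_card_eq_prime (IsPGroup.of_card hG) hG'
  have hne : commutator G ≠ ⊥ := fun hbot ↦ hp.out.ne_one (by rw [← hG', hbot, card_bot])
  obtain ⟨a, b, hab⟩ := exists_commutatorElement_ne_one hne
  obtain ⟨α, rfl⟩ := h.surjective a
  obtain ⟨β, rfl⟩ := h.surjective b
  have hu : zpowers (φ ⁅α, β⁆) = commutator G := by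
    rw [map_commutatorElement]
    exact zpowers_eq_of_card_eq_prime hG' (commutator_mem_commutator (mem_top _) (mem_top _)) hab
  have hle : (centralizer {φ α} ⊓ centralizer {φ β}).comap φ ≤ centralizer {⁅α, β⁆} := by
    rintro g ⟨hα, hβ⟩
    have comm_mem_center (γ : E) (hγ : φ g ∈ centralizer {φ γ}) : ⁅g, γ⁆ ∈ center E := by
      refine h.ker_le_center (MonoidHom.mem_ker.2 ?_)
      rw [map_commutatorElement, commutatorElement_eq_one_iff_mul_comm]
      exact mem_centralizer_singleton_iff.1 hγ
    exact mem_centralizer_singleton_iff.2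
      (commute_commutatorElement (comm_mem_center α hα) (comm_mem_center β hβ)).eq
  have hindex : (centralizer {⁅α, β⁆}).index ∣ p ^ 2 := by
    refine (index_dvd_of_le hle).trans ?_
    rw [index_comap_of_surjective _ h.surjective, ← hG']
    exact index_centralizer_inf_dvd_card_commutator_sq hcenter _ _
  obtain ⟨E', _, ψ, hψ, hE'⟩ := h.exists_isCentralExtension_quotient hcenter hu
  have hx' : (x : G ⧸ commutator G) ^ p ∉ commutator (G ⧸ commutator G) :=
    (mk_mem_commutator_iff _).not.2 (by rwa [sup_idem])
  rw [hE']
  exact mul_dvd_mul hindex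
    (hψ.card_commutator_dvd (card_quotient_of_card_eq_prime hG hG') hx')

end IsCentralExtension

section Presentation

variable (G : Type u) [Group G]

instance : (presentationKernel G).Normal := MonoidHom.normal_ker _

/-- The free central extension `F / [F, R]` of `G`, where `F` is the free group on `G` and `R` is
the kernel of `F → G`. -/
def freeCentralExtension :
    FreeGroup G ⧸ ⁅(⊤ : Subgroup (FreeGroup G)), presentationKernel G⁆ →* G :=
  QuotientGroup.lift _ (FreeGroup.lift id) (commutator_le_right _ (presentationKernel G))

theorem isCentralExtension_freeCentralExtension : IsCentralExtension (freeCentralExtension G) where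
  surjective := QuotientGroup.lift_surjective_of_surjective _ _
    (FreeGroup.lift_surjective_of_surjective Function.surjective_id) _
  ker_le_center := by
    refine (QuotientGroup.ker_lift _ _ _).trans_le (map_le_iff_le_comap.2 ?_)
    refine fun r hr ↦ (mk_mem_center_iff _).2 fun g ↦ ?_
    rw [commutator_comm]
    exact commutator_mem_commutator hr (mem_top g)

theorem card_commutator_freeCentralExtension :
    Nat.card (commutator (FreeGroup G ⧸ ⁅(⊤ : Subgroup (FreeGroup G)), presentationKernel G⁆)) =
      Nat.card (SchurMultiplier G) * Nat.card (commutator G) := by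
  have hsurj : Function.Surjective (FreeGroup.lift (id : G → G)) :=
    FreeGroup.lift_surjective_of_surjective Function.surjective_id
  have hM : Nat.card (SchurMultiplier G) =
      ⁅(⊤ : Subgroup (FreeGroup G)), presentationKernel G⁆.relIndex
        (presentationKernel G ⊓ commutator (FreeGroup G)) := rfl
  rw [hM, ← relIndex_commutator, ← relIndex_ker_commutator hsurj, ← presentationKernel,
    ← inf_relIndex_right (presentationKernel G), relIndex_mul_relIndex _ _ _ _ inf_le_right]
  exact le_inf (commutator_le_right _ _) (commutator_mono le_rfl le_top)

end Presentation

theorem card_schurMultiplier_mul_sq_dvd {p n : ℕ} [hp : Fact p.Prime] {G : Type*} [Group G]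
    (hG : Nat.card G = p ^ n) (hn : 5 ≤ n) (hne : commutator G ≠ ⊥) {x : G}
    (hx : x ^ p ∉ commutator G) :
    Nat.card (SchurMultiplier G) * p ^ 2 ∣ p ^ (n - 1).choose 2 := by
  have hext := isCentralExtension_freeCentralExtension G
  have hmul := card_commutator_freeCentralExtension G
  obtain ⟨k, -, hk⟩ := (Nat.dvd_prime_pow hp.out).1 (hG ▸ card_subgroup_dvd_card (commutator G))
  obtain _ | _ | k := k
  · exact absurd (card_eq_one.1 hk) hne
  · rw [zero_add, pow_one] at hk
    have hdvd := hext.card_commutator_dvd_of_card_commutator_eq_prime hG hx hk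
    rw [hmul, hk, ← pow_add] at hdvd
    have hle : 2 + (n - 2).choose 2 + 1 ≤ (n - 1).choose 2 := by
      rw [choose_two_eq_pred_add (n - 1), Nat.sub_sub]
      lia
    calc Nat.card (SchurMultiplier G) * p ^ 2
        = Nat.card (SchurMultiplier G) * p * p := by rw [sq, mul_assoc]
      _ ∣ p ^ (2 + (n - 2).choose 2) * p := mul_dvd_mul_right hdvd p
      _ = p ^ (2 + (n - 2).choose 2 + 1) := (pow_succ _ _).symm
      _ ∣ p ^ (n - 1).choose 2 := pow_dvd_pow p hle
  · have hdvd := hext.card_commutator_dvd hG hx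
    rw [hmul, hk] at hdvd
    exact (mul_dvd_mul_left _ (pow_dvd_pow p (Nat.le_add_left 2 k))).trans hdvd

/-- **Lemma 2.** There is no `p`-group of order `p^n` (`n ≥ 5`) with `s(G) = 2` whose
abelianization is not elementary abelian (i.e. does not have exponent `p`). -/
theorem no_s_eq_two_of_abelianization_not_elementary {p n : ℕ} (hp : p.Prime)
    {G : Type*} [Group G] (hG : Nat.card G = p ^ n) (hn : 5 ≤ n)
    (hnab : ∃ a b : G, a * b ≠ b * a)
    (hab : Monoid.exponent (Abelianization G) ≠ p) :
    Nat.card (SchurMultiplier G) ≠ p ^ ((n - 1) * (n - 2) / 2 - 1) := by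
  have : Fact p.Prime := ⟨hp⟩
  have : Finite G := Nat.finite_of_card_ne_zero (hG ▸ pow_ne_zero n hp.ne_zero)
  obtain ⟨a, b, hcomm⟩ := hnab
  have : Nontrivial G := ⟨_, _, hcomm⟩
  have hne : commutator G ≠ ⊥ := fun h ↦ hcomm (((commutator_eq_bot_iff G).1 h).is_comm.comm a b)
  obtain ⟨x, hx⟩ := exists_pow_notMem_commutator (IsPGroup.of_card hG) hab
  intro hM
  have hdvd := card_schurMultiplier_mul_sq_dvd hG hn hne hx
  rw [hM, ← pow_add, Nat.pow_dvd_pow_iff_le_right hp.one_lt, Nat.choose_two_right,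
    Nat.sub_sub] at hdvd
  lia
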